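/- Let Ω ⊆ ℝ be a bounded measurable set of Lebesgue measure 1, let Λ be a spectrum of Ω, and suppose T > 0 satisfies Λ + T = Λ. Then T is a positive integer. -/

import Mathlib

open MeasureTheory Set

/-- The exponential function `e_λ(x) = exp(2πiλx)`. -/
noncomputable def expF (lam : ℝ) : ℝ → ℂ :=
  fun x => Complex.exp (2 * (Real.pi : ℂ) * Complex.I * (lam : ℂ) * (x : ℂ))

/-- `Λ` is a spectrum of `Ω`. -/
def IsSpectrum (Ω Λ : Set ℝ) : Prop :=
  ∃ F : Λ → Lp ℂ 2 (volume.restrict Ω),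
    (∀ l : Λ, ⇑(F l) =ᵐ[volume.restrict Ω] expF (l : ℝ)) ∧
    Orthonormal ℂ F ∧
    (Submodule.span ℂ (Set.range F)).topologicalClosure = ⊤


lemma lintegral_periodize (h : ℝ → ENNReal) (T : ℝ) (hT : 0 < T) :
    ∫⁻ t, h t = ∑' k : ℤ, ∫⁻ t in Ioc 0 T, h (t - k • T) := by
  have e : ∀ k : ℤ, ∫⁻ t in Ioc 0 T, h (t - k • T) = ∫⁻ t in Ioc (0 + (-k) • T) (0 + (-k+1) • T), h t := by
    intro k
    have := (measurePreserving_sub_right (volume : Measure ℝ) (k • T)).setLIntegral_comp_emb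
      (MeasurableEquiv.subRight (k • T)).measurableEmbedding h (Ioc 0 T)
    rw [this, image_sub_const_Ioc]
    congr 3
    · simp
    · simp only [zsmul_eq_mul]; push_cast; ring
  simp_rw [e]
  rw [← (Equiv.neg ℤ).tsum_eq]
  simp only [Equiv.neg_apply, neg_neg]
  rw [← lintegral_iUnion (fun _ => measurableSet_Ioc) (Set.pairwise_disjoint_Ioc_add_zsmul 0 T),
    iUnion_Ioc_add_zsmul hT, setLIntegral_univ]

/-- The Fourier transform of the indicator. -/
noncomputable def GG (Ω : Set ℝ) (t : ℝ) : ℂ := ∫ x in Ω, expF t x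
/-- its power spectrum. -/
noncomputable def gg (Ω : Set ℝ) (t : ℝ) : ENNReal := ENNReal.ofReal (‖GG Ω t‖ ^ 2)

lemma expF_cont2 : Continuous (fun p : ℝ × ℝ => expF p.1 p.2) := by
  unfold expF; fun_prop
lemma expF_cont (t : ℝ) : Continuous (expF t) := by
  unfold expF; fun_prop

lemma norm_expF (t x : ℝ) : ‖expF t x‖ = 1 := by
  unfold expF
  rw [show (2 * (Real.pi : ℂ) * Complex.I * (t : ℂ) * (x : ℂ)) = ((2 * Real.pi * t * x : ℝ) : ℂ) * Complex.I by push_cast; ring]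
  exact Complex.norm_exp_ofReal_mul_I _

lemma conj_expF (t x : ℝ) : (starRingEnd ℂ) (expF t x) = expF (-t) x := by
  unfold expF
  rw [← Complex.exp_conj]
  simp [Complex.conj_ofNat]

lemma expF_mul (s t x : ℝ) : expF s x * expF t x = expF (s + t) x := by
  unfold expF
  rw [← Complex.exp_add]; congr 1; push_cast; ring

lemma gg_meas (Ω : Set ℝ) : Measurable (gg Ω) := by
  have h : StronglyMeasurable (GG Ω) := 
    (expF_cont2.stronglyMeasurable).integral_prod_right' (ν := volume.restrict Ω)
  unfold gg
  exact (h.measurable.norm.pow_const 2).ennreal_ofReal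

lemma spectrum_countable {Ω Λ : Set ℝ} (hΛ : IsSpectrum Ω Λ) : Countable Λ := by
  obtain ⟨F, -, hF, -⟩ := hΛ
  have : Fact ((2:ENNReal) ≠ ⊤) := ⟨by simp⟩
  refine Pairwise.countable_of_isOpen_disjoint (s := fun l => Metric.ball (F l) (1/2)) ?_
    (fun _ => Metric.isOpen_ball) (fun l => ⟨F l, by simp⟩)
  intro i j hij
  apply Metric.ball_disjoint_ball
  have h2 : ‖F i - F j‖ ^ 2 = 2 := by
    rw [@norm_sub_sq ℂ, hF.2 hij, hF.1, hF.1]; norm_num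
  rw [dist_eq_norm]
  nlinarith [norm_nonneg (F i - F j)]

lemma spectrum_parseval {Ω Λ : Set ℝ} (hvol : volume Ω = 1) (hΛ : IsSpectrum Ω Λ) (t : ℝ) :
    ∑' l : Λ, gg Ω (t - l) = 1 := by
  obtain ⟨F, hFe, hF, hc⟩ := hΛ
  have : IsFiniteMeasure (volume.restrict Ω) := ⟨by simp [hvol]⟩
  let b := HilbertBasis.mk hF hc.ge
  have hmem : MemLp (expF t) 2 (volume.restrict Ω) :=
    MemLp.of_bound (expF_cont t).aestronglyMeasurable 1 (by simp [norm_expF])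
  let u := hmem.toLp
  have hb : ∀ l, b l = F l := fun l => by simp [b]
  have hin : ∀ l, inner ℂ (F l) u = GG Ω (t - l) := by
    intro l
    rw [L2.inner_def]
    apply integral_congr_ae
    filter_upwards [hFe l, hmem.coeFn_toLp] with x h1 h2
    rw [h1, h2]
    simp only [RCLike.inner_apply, conj_expF, expF_mul]; rfl
  have hu : inner ℂ u u = (1 : ℂ) := by
    rw [L2.inner_def]
    have : ∫ x in Ω, (1:ℂ) = 1 := by simp [Measure.real, hvol]
    rw [← this]
    apply integral_congr_ae
    filter_upwards [hmem.coeFn_toLp] with x h2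
    rw [h2]
    simp only [RCLike.inner_apply, conj_expF, expF_mul]; simp [expF]
  have hs := b.hasSum_inner_mul_inner u u
  rw [hu] at hs
  have hs' : HasSum (fun l : Λ => ‖GG Ω (t - l)‖ ^ 2) 1 := by
    rw [← Complex.hasSum_ofReal]
    have e : (fun l : Λ => ((‖GG Ω (t - l)‖ ^ 2 : ℝ) : ℂ)) =
        fun l => inner ℂ u (b l) * inner ℂ (b l) u := by
      funext l
      rw [hb, ← inner_conj_symm, hin, ← Complex.normSq_eq_norm_sq, Complex.normSq_eq_conj_mul_self]
    rw [e, Complex.ofReal_one]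
    exact hs
  unfold gg
  rw [← ENNReal.ofReal_tsum_of_nonneg (fun _ => by positivity) hs'.summable, hs'.tsum_eq]
  simp

lemma circle_parseval {Ω : Set ℝ} {L R : ℝ} (hLR : L < R) (hΩ : Ω ⊆ Ioc L R) (hm : MeasurableSet Ω)
    (hvol : volume Ω = 1) (t : ℝ) :
    ∑' k : ℤ, gg Ω (t - k • (1 / (R - L))) = ENNReal.ofReal (R - L) := by
  have hmem : MemLp (Ω.indicator (expF t)) 2 (volume.restrict (Ioc L R)) :=
    MemLp.of_bound ((expF_cont t).stronglyMeasurable.indicator hm).aestronglyMeasurable 1 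
      (by filter_upwards with x; exact (norm_indicator_le_norm_self _ _).trans (norm_expF t x).le)
  have hs := hasSum_sq_fourierCoeffOn hLR hmem
  have hd : 0 < R - L := sub_pos.2 hLR
  have hc : ∀ n : ℤ, fourierCoeffOn hLR (Ω.indicator (expF t)) n = (1 / (R - L) : ℝ) • GG Ω (t - n • (1 / (R - L))) := by
    intro n
    rw [fourierCoeffOn_eq_integral, intervalIntegral.integral_of_le hLR.le]
    congr 1
    have : ∀ x : ℝ, fourier (-n) (x : AddCircle (R - L)) • Ω.indicator (expF t) x = Ω.indicator (expF (t - n • (1 / (R - L)))) x := by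
      intro x
      by_cases hx : x ∈ Ω
      · simp only [indicator_of_mem hx, fourier_coe_apply, expF, smul_eq_mul, ← Complex.exp_add]
        congr 1
        have : (R - L : ℂ) ≠ 0 := by exact_mod_cast hd.ne'
        push_cast [zsmul_eq_mul]
        field_simp
        ring
      · simp [hx]
    simp_rw [this]
    rw [setIntegral_indicator hm, inter_eq_right.2 hΩ]; rfl
  have hI : ∫ x in L..R, ‖Ω.indicator (expF t) x‖ ^ 2 = 1 := by
    have : ∀ x, ‖Ω.indicator (expF t) x‖ ^ 2 = Ω.indicator (fun _ => (1:ℝ)) x := by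
      intro x
      by_cases hx : x ∈ Ω <;> simp [hx, norm_expF]
    simp_rw [this]
    rw [intervalIntegral.integral_of_le hLR.le, setIntegral_indicator hm, inter_eq_right.2 hΩ]
    simp [Measure.real, hvol]
  rw [hI] at hs
  have hs' : HasSum (fun n : ℤ => ‖GG Ω (t - n • (1 / (R - L)))‖ ^ 2) (R - L) := by
    have e : (fun n : ℤ => ‖GG Ω (t - n • (1 / (R - L)))‖ ^ 2) =
        fun n => (R - L) ^ 2 * ‖fourierCoeffOn hLR (Ω.indicator (expF t)) n‖ ^ 2 := by
      funext n
      rw [hc, norm_smul, mul_pow, Real.norm_of_nonneg (by positivity), ← mul_assoc, ← mul_pow,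
        mul_one_div_cancel hd.ne', one_pow, one_mul]
    have e2 : (R - L) ^ 2 * ((R - L)⁻¹ • 1) = R - L := by
      rw [smul_eq_mul]; field_simp
    have := hs.mul_left ((R - L)^2)
    rw [e2] at this
    rw [e]
    exact this
  unfold gg
  rw [← ENNReal.ofReal_tsum_of_nonneg (fun _ => by positivity) hs'.summable, hs'.tsum_eq]

lemma plancherel {Ω : Set ℝ} (hbd : Bornology.IsBounded Ω) (hm : MeasurableSet Ω)
    (hvol : volume Ω = 1) : ∫⁻ t, gg Ω t = 1 := by
  obtain ⟨r, hr⟩ := hbd.subset_ball 0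
  have hr' : Ω ⊆ Ioc (-|r| - 1) (|r| + 1) := by
    intro x hx
    have := hr hx
    rw [Real.ball_eq_Ioo] at this
    constructor <;> [linarith [this.1, le_abs_self r]; linarith [this.2, le_abs_self r]]
  have hlt : -|r| - 1 < |r| + 1 := by linarith [abs_nonneg r]
  have hd := sub_pos.2 hlt
  rw [lintegral_periodize _ _ (one_div_pos.2 hd), ← lintegral_tsum]
  · simp_rw [circle_parseval hlt hr' hm hvol]
    rw [setLIntegral_const, Real.volume_Ioc, ← ENNReal.ofReal_mul hd.le]
    simp
    field_simp
  · intro k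
    exact ((gg_meas Ω).comp (measurable_id.sub_const _)).aemeasurable

lemma per_zsmul {Λ : Set ℝ} {T : ℝ} (hper : (fun l => l + T) '' Λ = Λ) (k : ℤ) (l : ℝ) :
    l + k • T ∈ Λ ↔ l ∈ Λ := by
  have h1 : ∀ l, l + T ∈ Λ ↔ l ∈ Λ := by
    intro l
    constructor
    · intro h
      rw [← hper] at h
      obtain ⟨m, hm, e⟩ := h
      have : m = l := by simpa using e
      exact this ▸ hm
    · intro h
      rw [← hper]; exact ⟨l, h, rfl⟩
  induction k with
  | zero => simp
  | succ n ih => rw [add_smul, one_smul, ← add_assoc, h1]; exact ih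
  | pred n ih =>
    refine Iff.trans ?_ ih
    rw [← h1 (l + (-(n:ℤ) - 1) • T), sub_smul, one_smul, add_assoc, sub_add_cancel]

/-- `Λ` splits as its part in a period times `ℤ`. -/
noncomputable def splitE {Λ : Set ℝ} {T : ℝ} (hT : 0 < T) (hper : (fun l => l + T) '' Λ = Λ) :
    (↥(Λ ∩ Ioc 0 T) × ℤ) ≃ Λ where
  toFun p := ⟨p.1 + p.2 • T, (per_zsmul hper _ _).2 p.1.2.1⟩
  invFun l := (⟨toIocMod hT 0 l, by
    rw [← per_zsmul hper (toIocDiv hT 0 l), toIocMod_add_toIocDiv_zsmul]; exact l.2, by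
    simpa using toIocMod_mem_Ioc hT 0 (l : ℝ)⟩, toIocDiv hT 0 l)
  left_inv := by
    rintro ⟨⟨l, hl, hl2⟩, k⟩
    have e1 : toIocMod hT 0 l = l := (toIocMod_eq_self hT).2 (by simpa using hl2)
    have e2 : toIocDiv hT 0 l = 0 := toIocDiv_eq_of_sub_zsmul_mem_Ioc hT (by simpa using hl2)
    ext <;> simp [e1, e2, -zsmul_eq_mul]
  right_inv := by
    intro l
    ext
    simp only [toIocMod_add_toIocDiv_zsmul]


/-- Any period of a spectrum of a set of measure 1 must be a positive integer. -/
theorem period_of_spectrum_is_integer (Ω : Set ℝ)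
    (hbd : Bornology.IsBounded Ω) (hmeas : MeasurableSet Ω)
    (hvol : volume Ω = 1) (Λ : Set ℝ) (hΛ : IsSpectrum Ω Λ)
    (T : ℝ) (hT : 0 < T) (hper : (fun l => l + T) '' Λ = Λ) :
    ∃ k : ℕ, 0 < k ∧ T = (k : ℝ) := by
  have := spectrum_countable hΛ
  have h1 : ∫⁻ t in Ioc 0 T, ∑' l : Λ, gg Ω (t - l) = ENNReal.ofReal T := by
    simp_rw [spectrum_parseval hvol hΛ]
    simp
  have hmm : ∀ s : ℝ, Measurable (fun t => gg Ω (t - s)) := fun s =>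
    (gg_meas Ω).comp (measurable_id.sub_const _)
  rw [lintegral_tsum (fun l => (hmm _).aemeasurable), ← (splitE hT hper).tsum_eq,
    ENNReal.tsum_prod'] at h1
  have h2 : ∀ l : ↥(Λ ∩ Ioc 0 T), ∑' k : ℤ, ∫⁻ t in Ioc 0 T, gg Ω (t - (splitE hT hper (l, k) : ℝ)) = 1 := by
    intro l
    rw [← plancherel hbd hmeas hvol, ← lintegral_sub_right_eq_self _ (l : ℝ),
      lintegral_periodize _ T hT]
    refine tsum_congr fun k => lintegral_congr fun t => ?_
    congr 1
    simp only [splitE, Equiv.coe_fn_mk]; ring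
  simp_rw [h2] at h1
  rw [ENNReal.tsum_set_one] at h1
  have hfin : (Λ ∩ Ioc 0 T).Finite := by
    rw [← Set.encard_ne_top_iff]
    intro h
    rw [h] at h1; simp at h1
  rw [hfin.encard_eq_coe_toFinset_card] at h1
  have h3 : T = (hfin.toFinset.card : ℝ) := by
    have := congrArg ENNReal.toReal h1
    rw [ENNReal.toReal_ofReal hT.le] at this
    simpa using this.symm
  refine ⟨_, ?_, h3⟩
  rw [h3] at hT
  exact_mod_cast hT
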